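/- For every n ≥ 1 and every integer i ≥ 2, in ℤ[x₁,…,xₙ] one has m_{(4,2,1^{i−2})} = σ₁²·σ₂·σᵢ − 2·σ₂²·σᵢ − σ₁·σ₃·σᵢ + 4·σ₄·σᵢ + (3i−1)·σ₁·σ₂·σ_{i+1} − i·σ₁³·σ_{i+1} − (3i−3)·σ₃·σ_{i+1} − (2i−2)·σ₂·σ_{i+2} + i·σ₁²·σ_{i+2} − (2i+2)·σ₁·σ_{i+3} + (i² + 3i − 4)·σ_{i+4}. -/

import Mathlib

open MvPolynomial

/-- The monomial symmetric polynomial in `n` variables over `ℤ` associated with the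
multiset of (positive) parts `lam`: the sum of all distinct monomials whose multiset of
nonzero exponents equals `lam`. -/
noncomputable def mSym (n : ℕ) (lam : Multiset ℕ) : MvPolynomial (Fin n) ℤ :=
  ∑ f : Fin n → Fin (lam.sum + 1),
    if Multiset.map (fun i => (f i : ℕ)) (Finset.univ.filter fun i => (f i : ℕ) ≠ 0).val = lam
    then ∏ i, X i ^ (f i : ℕ) else 0

/-- Auxiliary generalization of `mSym`: arbitrary exponent bound and values. -/
noncomputable def auxS {R : Type*} [CommRing R] (N n : ℕ) (x : Fin n → R) (lam : Multiset ℕ) : R :=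
  ∑ f : Fin n → Fin (N + 1),
    if Multiset.map (fun i => (f i : ℕ)) (Finset.univ.filter fun i => (f i : ℕ) ≠ 0).val = lam
    then ∏ i, x i ^ (f i : ℕ) else 0

/-- Elementary symmetric values. -/
noncomputable def auxE {R : Type*} [CommRing R] (n : ℕ) (x : Fin n → R) (k : ℕ) : R :=
  (Finset.univ.val.map x).esymm k

theorem auxE_zero {R : Type*} [CommRing R] (n : ℕ) (x : Fin n → R) : auxE n x 0 = 1 := by
  simp [auxE, Multiset.esymm]

theorem auxE_nil {R : Type*} [CommRing R] (x : Fin 0 → R) (k : ℕ) : auxE 0 x (k + 1) = 0 := by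
  have h : (Finset.univ.val.map x : Multiset R) = 0 := by simp
  rw [auxE, h, Multiset.esymm, Multiset.powersetCard_zero_right]
  simp

theorem auxE_succ {R : Type*} [CommRing R] (n : ℕ) (x : Fin (n + 1) → R) (k : ℕ) :
    auxE (n + 1) x (k + 1) = auxE n (Fin.tail x) (k + 1) + x 0 * auxE n (Fin.tail x) k := by
  have h : (Finset.univ.val.map x : Multiset R)
      = x 0 ::ₘ (Finset.univ.val.map (Fin.tail x)) := by
    rw [Fin.univ_succ]
    simp only [Finset.cons_val, Finset.map_val, Multiset.map_cons, Multiset.map_map]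
    rfl
  simp only [auxE, h, Multiset.esymm, Multiset.powersetCard_cons, Multiset.map_add,
    Multiset.sum_add, Multiset.map_map, Function.comp_def, Multiset.prod_cons,
    Multiset.sum_map_mul_left]

theorem aux_parts (N n : ℕ) (a : Fin (N + 1)) (g : Fin n → Fin (N + 1)) :
    Multiset.map (fun i => ((Fin.cons a g : Fin (n + 1) → Fin (N + 1)) i : ℕ))
      (Finset.univ.filter fun i => ((Fin.cons a g : Fin (n + 1) → Fin (N + 1)) i : ℕ) ≠ 0).val
    = if (a : ℕ) = 0 then
        Multiset.map (fun i => (g i : ℕ)) (Finset.univ.filter fun i => (g i : ℕ) ≠ 0).val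
      else (a : ℕ) ::ₘ
        Multiset.map (fun i => (g i : ℕ)) (Finset.univ.filter fun i => (g i : ℕ) ≠ 0).val := by
  have key : ∀ (m : ℕ) (h : Fin m → Fin (N + 1)),
      Multiset.map (fun i => (h i : ℕ)) (Finset.univ.filter fun i => (h i : ℕ) ≠ 0).val
      = Multiset.filter (fun k => k ≠ 0) (Multiset.map (fun i => (h i : ℕ)) Finset.univ.val) := by
    intro m h
    rw [Multiset.filter_map]
    rfl
  rw [key, key, Fin.univ_succ]
  simp only [Finset.cons_val, Finset.map_val, Multiset.map_cons, Multiset.map_map,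
    Function.comp_def, Fin.cons_zero]
  by_cases ha : (a : ℕ) = 0
  · rw [if_pos ha, Multiset.filter_cons_of_neg (p := fun k : ℕ => k ≠ 0) _ (not_not.2 ha)]
    simp
  · rw [if_neg ha, Multiset.filter_cons_of_pos (p := fun k : ℕ => k ≠ 0) _ ha]
    simp

theorem auxS_succ {R : Type*} [CommRing R] (N n : ℕ) (x : Fin (n + 1) → R) (lam : Multiset ℕ)
    (h0 : 0 ∉ lam) (hN : ∀ a ∈ lam, a ≤ N) :
    auxS N (n + 1) x lam = auxS N n (Fin.tail x) lam
      + ∑ a ∈ lam.toFinset, x 0 ^ a * auxS N n (Fin.tail x) (lam.erase a) := by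
  have h1 : auxS N (n + 1) x lam = ∑ a : Fin (N + 1),
      if (a : ℕ) = 0 then auxS N n (Fin.tail x) lam
      else if (a : ℕ) ∈ lam then x 0 ^ (a : ℕ) * auxS N n (Fin.tail x) (lam.erase a) else 0 := by
    unfold auxS
    rw [← (Fin.consEquiv (fun _ => Fin (N + 1))).sum_comp, Fintype.sum_prod_type]
    refine Finset.sum_congr rfl fun a _ => ?_
    show (∑ g : Fin n → Fin (N + 1),
      if Multiset.map (fun i => ((Fin.cons a g : Fin (n + 1) → Fin (N + 1)) i : ℕ))
        (Finset.univ.filter fun i => ((Fin.cons a g : Fin (n + 1) → Fin (N + 1)) i : ℕ) ≠ 0).val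
          = lam
      then ∏ i, x i ^ ((Fin.cons a g : Fin (n + 1) → Fin (N + 1)) i : ℕ) else 0) = _
    simp only [aux_parts]
    simp only [Fin.prod_univ_succ, Fin.cons_zero,
      Fin.cons_succ]
    by_cases ha : (a : ℕ) = 0
    · simp [ha, Fin.tail]
    · simp only [if_neg ha]
      by_cases hm : (a : ℕ) ∈ lam
      · rw [if_pos hm, Finset.mul_sum]
        refine Finset.sum_congr rfl fun g _ => ?_
        have : ∀ s : Multiset ℕ, ((a : ℕ) ::ₘ s = lam) ↔ s = lam.erase a := by
          intro s
          constructor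
          · rintro rfl
            simp
          · rintro rfl
            exact Multiset.cons_erase hm
        simp only [this, mul_ite, mul_zero, Fin.tail]
      · rw [if_neg hm]
        refine Finset.sum_eq_zero fun g _ => ?_
        rw [if_neg]
        rintro h
        apply hm
        rw [← h]
        exact Multiset.mem_cons_self _ _
  rw [h1, Fin.sum_univ_eq_sum_range (fun a => if a = 0 then auxS N n (Fin.tail x) lam
      else if a ∈ lam then x 0 ^ a * auxS N n (Fin.tail x) (lam.erase a) else 0) (N + 1),
    Finset.sum_range_succ', add_comm]
  simp only [if_true, Nat.succ_ne_zero, if_false]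
  congr 1
  rw [← Finset.sum_filter]
  refine Finset.sum_bij (fun a _ => a + 1) ?_ ?_ ?_ ?_
  · intro a ha
    simpa using (Finset.mem_filter.1 ha).2
  · intro a _ b _ h
    omega
  · intro b hb
    have hb' : b ∈ lam := by simpa using hb
    have hb0 : b ≠ 0 := fun h => h0 (h ▸ hb')
    have := hN b hb'
    refine ⟨b - 1, ?_, by omega⟩
    have e : b - 1 + 1 = b := by omega
    simp only [Finset.mem_filter, Finset.mem_range, e]
    exact ⟨by omega, hb'⟩
  · intro a _
    rfl

theorem auxS_nil {R : Type*} [CommRing R] (N : ℕ) (x : Fin 0 → R) (lam : Multiset ℕ)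
    (h : lam ≠ 0) : auxS N 0 x lam = 0 := by
  simp [auxS, h.symm]

section rec
variable {R : Type*} [CommRing R] (N n : ℕ) (hN : 4 ≤ N)

theorem rec_E0 (x : Fin n → R) : auxS N n x 0 = 1 := by
  induction n with
  | zero => simp [auxS]
  | succ n ih => rw [auxS_succ _ _ _ _ (by simp) (by simp), ih]; simp

theorem tf (j : ℕ) : (Multiset.replicate (j + 1) 1).toFinset = {1} := by
  ext a
  simp [Multiset.mem_replicate, -Multiset.replicate_succ]

theorem recS_1 (hN : 4 ≤ N) (x : Fin (n + 1) → R) (j : ℕ) :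
    auxS N (n + 1) x (Multiset.replicate (j + 1) 1)
      = auxS N n (Fin.tail x) (Multiset.replicate (j + 1) 1)
        + x 0 * auxS N n (Fin.tail x) (Multiset.replicate j 1) := by
  rw [auxS_succ _ _ _ _ (by simp [Multiset.mem_replicate])
    (by intro a; simp [Multiset.mem_replicate]; omega), tf]
  simp [Multiset.replicate_succ]

theorem recS_a0 (a : ℕ) (ha : 1 < a) (haN : a ≤ N) (x : Fin (n + 1) → R) :
    auxS N (n + 1) x {a}
      = auxS N n (Fin.tail x) {a} + x 0 ^ a := by
  rw [auxS_succ _ _ _ _ (by simp; omega) (by simpa using haN)]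
  simp [rec_E0]

theorem recS_a (a : ℕ) (ha : 1 < a) (haN : a ≤ N) (x : Fin (n + 1) → R) (j : ℕ) :
    auxS N (n + 1) x (a ::ₘ Multiset.replicate (j + 1) 1)
      = auxS N n (Fin.tail x) (a ::ₘ Multiset.replicate (j + 1) 1)
        + x 0 * auxS N n (Fin.tail x) (a ::ₘ Multiset.replicate j 1)
        + x 0 ^ a * auxS N n (Fin.tail x) (Multiset.replicate (j + 1) 1) := by
  rw [auxS_succ _ _ _ _ (by simp [Multiset.mem_replicate]; omega)
    (by intro b; simp [Multiset.mem_replicate]; omega)]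
  rw [Multiset.toFinset_cons, tf, Finset.sum_insert (by simp; omega), Finset.sum_singleton,
    Multiset.erase_cons_head, Multiset.erase_cons_tail _ (by omega),
    Multiset.replicate_succ, Multiset.erase_cons_head]
  ring

theorem recS_42_0 (hN : 4 ≤ N) (x : Fin (n + 1) → R) :
    auxS N (n + 1) x (4 ::ₘ {2})
      = auxS N n (Fin.tail x) (4 ::ₘ {2})
        + x 0 ^ 2 * auxS N n (Fin.tail x) {4} + x 0 ^ 4 * auxS N n (Fin.tail x) {2} := by
  rw [auxS_succ _ _ _ _ (by simp)
    (by intro b; simp; omega)]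
  rw [Multiset.toFinset_cons, Multiset.toFinset_singleton, Finset.sum_insert (by simp),
    Finset.sum_singleton,
    Multiset.erase_cons_head, Multiset.erase_cons_tail _ (by omega)]
  simp
  ring

theorem recS_42 (hN : 4 ≤ N) (x : Fin (n + 1) → R) (j : ℕ) :
    auxS N (n + 1) x (4 ::ₘ 2 ::ₘ Multiset.replicate (j + 1) 1)
      = auxS N n (Fin.tail x) (4 ::ₘ 2 ::ₘ Multiset.replicate (j + 1) 1)
        + x 0 * auxS N n (Fin.tail x) (4 ::ₘ 2 ::ₘ Multiset.replicate j 1)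
        + x 0 ^ 2 * auxS N n (Fin.tail x) (4 ::ₘ Multiset.replicate (j + 1) 1)
        + x 0 ^ 4 * auxS N n (Fin.tail x) (2 ::ₘ Multiset.replicate (j + 1) 1) := by
  rw [auxS_succ _ _ _ _ (by simp [Multiset.mem_replicate])
    (by intro b; simp [Multiset.mem_replicate]; omega)]
  rw [Multiset.toFinset_cons, Multiset.toFinset_cons, tf, Finset.sum_insert (by simp),
    Finset.sum_insert (by simp), Finset.sum_singleton,
    Multiset.erase_cons_head, Multiset.erase_cons_tail _ (by omega),
    Multiset.erase_cons_head, Multiset.erase_cons_tail _ (by omega),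
    Multiset.erase_cons_tail _ (by omega),
    Multiset.replicate_succ, Multiset.erase_cons_head]
  ring

theorem formE (hN : 4 ≤ N) (x : Fin n → R) (j : ℕ) :
    auxS N n x (Multiset.replicate j 1) = auxE n x j := by
  induction n generalizing j with
  | zero =>
    cases j with
    | zero => simp [rec_E0, auxE_zero]
    | succ j => rw [auxS_nil _ _ _ (by simp [Multiset.replicate_succ]), auxE_nil]
  | succ n ih =>
    cases j with
    | zero => simp [rec_E0, auxE_zero]
    | succ j => rw [recS_1 _ _ hN, auxE_succ, ih, ih]

theorem formA (hN : 4 ≤ N) (x : Fin n → R) (j : ℕ) :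
    auxS N n x (2 ::ₘ Multiset.replicate j 1)
      = auxE n x 1 * auxE n x (j + 1) - (j + 2) * auxE n x (j + 2) := by
  induction n generalizing j with
  | zero => rw [auxS_nil _ _ _ (by simp)]; simp [auxE_nil]
  | succ n ih =>
    have e := auxE_succ n x
    cases j with
    | zero =>
      have h := ih (Fin.tail x) 0
      simp only [Multiset.replicate_zero, Multiset.cons_zero] at h ⊢
      rw [recS_a0 _ _ 2 (by omega) (by omega), h]
      simp only [e, auxE_zero, zero_add, e 0, e 1]
      push_cast
      ring
    | succ j =>
      rw [recS_a _ _ 2 (by omega) (by omega), ih, ih, formE _ _ hN]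
      rw [e (j + 1), e (j + 1 + 1), e 0, auxE_zero]
      push_cast
      simp only [zero_add, add_assoc, Nat.reduceAdd]
      ring

theorem formB (hN : 4 ≤ N) (x : Fin n → R) (j : ℕ) :
    auxS N n x (4 ::ₘ Multiset.replicate j 1)
      = (auxE n x 1 ^ 3 - 3 * auxE n x 1 * auxE n x 2 + 3 * auxE n x 3) * auxE n x (j + 1)
        - (auxE n x 1 ^ 2 - 2 * auxE n x 2) * auxE n x (j + 2)
        + auxE n x 1 * auxE n x (j + 3) - (j + 4) * auxE n x (j + 4) := by
  induction n generalizing j with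
  | zero => rw [auxS_nil _ _ _ (by simp)]; simp [auxE_nil]
  | succ n ih =>
    have e := auxE_succ n x
    cases j with
    | zero =>
      have h := ih (Fin.tail x) 0
      simp only [Multiset.replicate_zero, Multiset.cons_zero] at h ⊢
      rw [recS_a0 _ _ 4 (by omega) (by omega), h]
      simp only [zero_add]
      rw [e 0, e 1, e 2, e 3, auxE_zero]
      push_cast
      ring
    | succ j =>
      rw [recS_a _ _ 4 (by omega) (by omega), ih, ih, formE _ _ hN]
      rw [e (j + 1), e (j + 1 + 1), e (j + 1 + 2), e (j + 1 + 3), e 0, e 1, e 2, auxE_zero]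
      push_cast
      simp only [zero_add, add_assoc, Nat.reduceAdd]
      ring

theorem formM (hN : 4 ≤ N) (x : Fin n → R) (j : ℕ) :
    auxS N n x (4 ::ₘ 2 ::ₘ Multiset.replicate j 1)
      = auxE n x 1 ^ 2 * auxE n x 2 * auxE n x (j + 2) - 2 * auxE n x 2 ^ 2 * auxE n x (j + 2)
        - auxE n x 1 * auxE n x 3 * auxE n x (j + 2) + 4 * auxE n x 4 * auxE n x (j + 2)
        + (3 * (j + 2) - 1) * auxE n x 1 * auxE n x 2 * auxE n x (j + 3)
        - (j + 2) * auxE n x 1 ^ 3 * auxE n x (j + 3)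
        - (3 * (j + 2) - 3) * auxE n x 3 * auxE n x (j + 3)
        - (2 * (j + 2) - 2) * auxE n x 2 * auxE n x (j + 4)
        + (j + 2) * auxE n x 1 ^ 2 * auxE n x (j + 4)
        - (2 * (j + 2) + 2) * auxE n x 1 * auxE n x (j + 5)
        + ((j + 2) ^ 2 + 3 * (j + 2) - 4) * auxE n x (j + 6) := by
  induction n generalizing j with
  | zero => rw [auxS_nil _ _ _ (by simp)]; simp [auxE_nil]
  | succ n ih =>
    have e := auxE_succ n x
    cases j with
    | zero =>
      have h := ih (Fin.tail x) 0
      have hA := formA N n hN (Fin.tail x) 0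
      have hB := formB N n hN (Fin.tail x) 0
      simp only [Multiset.replicate_zero, Multiset.cons_zero] at h hA hB ⊢
      rw [recS_42_0 _ _ hN, h, hA, hB]
      simp only [zero_add]
      rw [e 0, e 1, e 2, e 3, e 4, e 5, auxE_zero]
      push_cast
      ring
    | succ j =>
      rw [recS_42 _ _ hN, ih, ih, formA _ _ hN, formB _ _ hN]
      rw [e (j + 1 + 1), e (j + 1 + 2), e (j + 1 + 3), e (j + 1 + 4), e (j + 1 + 5),
        e 0, e 1, e 2, e 3, auxE_zero]
      push_cast
      simp only [zero_add, add_assoc, Nat.reduceAdd]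
      ring

end rec

theorem stmt_18 (n : ℕ) (hn : 1 ≤ n) (i : ℕ) (hi : 2 ≤ i) :
    mSym n (4 ::ₘ 2 ::ₘ Multiset.replicate (i - 2) 1)
      = esymm (Fin n) ℤ 1^2 * esymm (Fin n) ℤ 2 * esymm (Fin n) ℤ (i) - C ((2 : ℤ)) * esymm (Fin n) ℤ 2^2 * esymm (Fin n) ℤ (i) - esymm (Fin n) ℤ 1 * esymm (Fin n) ℤ 3 * esymm (Fin n) ℤ (i)
        + C ((4 : ℤ)) * esymm (Fin n) ℤ 4 * esymm (Fin n) ℤ (i)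
        + C ((3 * (i : ℤ) - 1 : ℤ)) * esymm (Fin n) ℤ 1 * esymm (Fin n) ℤ 2 * esymm (Fin n) ℤ (i + 1)
        - C (((i : ℤ) : ℤ)) * esymm (Fin n) ℤ 1^3 * esymm (Fin n) ℤ (i + 1)
        - C ((3 * (i : ℤ) - 3 : ℤ)) * esymm (Fin n) ℤ 3 * esymm (Fin n) ℤ (i + 1)
        - C ((2 * (i : ℤ) - 2 : ℤ)) * esymm (Fin n) ℤ 2 * esymm (Fin n) ℤ (i + 2)
        + C (((i : ℤ) : ℤ)) * esymm (Fin n) ℤ 1^2 * esymm (Fin n) ℤ (i + 2)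
        - C ((2 * (i : ℤ) + 2 : ℤ)) * esymm (Fin n) ℤ 1 * esymm (Fin n) ℤ (i + 3)
        + C (((i : ℤ)^2 + 3 * (i : ℤ) - 4 : ℤ)) * esymm (Fin n) ℤ (i + 4) := by
  obtain ⟨j, rfl⟩ : ∃ j, i = j + 2 := ⟨i - 2, by omega⟩
  have hE : ∀ k, esymm (Fin n) ℤ k = auxE n (X : Fin n → MvPolynomial (Fin n) ℤ) k := by
    intro k
    rw [esymm_eq_multiset_esymm]
    rfl
  have h := formM (4 ::ₘ 2 ::ₘ Multiset.replicate (j + 2 - 2) 1).sum n (by simp)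
    (X : Fin n → MvPolynomial (Fin n) ℤ) (j + 2 - 2)
  simp only [Nat.add_sub_cancel] at h ⊢
  have h2 : mSym n (4 ::ₘ 2 ::ₘ Multiset.replicate j 1) = _ := h
  rw [h2]
  simp only [hE, add_assoc, Nat.reduceAdd]
  simp only [map_sub, map_add, map_mul, map_pow, map_natCast, map_ofNat, map_one]
  push_cast
  simp only [map_sub, map_add, map_mul, map_pow, map_natCast, map_ofNat, map_one]
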